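/- If a permutation π has opposing adjacencies, i.e. π contains at least one up-adjacency and at least one down-adjacency, then μ(1,π) = 0. -/

import Mathlib

/-!
The permutation pattern poset and its Möbius function.

A permutation of length `n` is represented as an element of the symmetric
group on `Fin n`; the collection of all permutations of all lengths is the
sigma type `PPerm`.  Pattern containment `PPerm.Le` makes `PPerm` into the
permutation pattern poset, and `mu` is its Möbius function, defined by the
usual recursion `μ(σ,σ) = 1`, `μ(σ,π) = -∑_{σ ≤ λ < π} μ(σ,λ)` for `σ < π`
and `μ(σ,π) = 0` otherwise.
-/

open scoped Classical

/-- A permutation of an arbitrary finite length `n`, as an element of the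
symmetric group on `Fin n`. -/
abbrev PPerm : Type := Σ n : ℕ, Equiv.Perm (Fin n)

namespace PPerm

/-- Classical pattern containment `σ ≤ π`: there is a strictly increasing map
of positions along which `π` realises the same relative order as `σ`. -/
def Le (σ π : PPerm) : Prop :=
  ∃ f : Fin σ.1 → Fin π.1, StrictMono f ∧
    ∀ a b : Fin σ.1, σ.2 a < σ.2 b ↔ π.2 (f a) < π.2 (f b)

/-- Strict pattern containment. -/
def Lt (σ π : PPerm) : Prop := Le σ π ∧ σ ≠ π

/-- The permutation `1` of length one. -/
def one : PPerm := ⟨1, 1⟩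

/-- The direct sum `α ⊕ β` of two permutations: `β` is placed after and
above `α`. -/
def dsum (α β : PPerm) : PPerm :=
  ⟨α.1 + β.1, finSumFinEquiv.symm.trans ((Equiv.sumCongr α.2 β.2).trans finSumFinEquiv)⟩

end PPerm

/-- Fuelled recursion computing the Möbius function of the permutation
pattern poset.  Any `λ` with `σ ≤ λ < π` has length `< |π|`, so for any
fuel `≥ |π| + 1` this computes the standard recursion
`μ(σ,σ) = 1`, `μ(σ,π) = -∑_{σ ≤ λ < π} μ(σ,λ)` for `σ < π`, and
`μ(σ,π) = 0` when `σ ≰ π`. -/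
noncomputable def muAux : ℕ → PPerm → PPerm → ℤ
  | 0, _, _ => 0
  | n + 1, σ, π =>
    if σ = π then 1
    else if PPerm.Le σ π then
      - ∑ m ∈ Finset.range π.1,
          ∑ p ∈ Finset.univ.filter
              (fun p : Equiv.Perm (Fin m) => PPerm.Le σ ⟨m, p⟩ ∧ PPerm.Le ⟨m, p⟩ π),
            muAux n σ ⟨m, p⟩
    else 0

/-- The Möbius function of the permutation pattern poset. -/
noncomputable def mu (σ π : PPerm) : ℤ := muAux (π.1 + 1) σ π

/-- The closed interval `[σ, π]` of the permutation pattern poset, as a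
finset (any `λ ≤ π` has length `≤ |π|`). -/
noncomputable def intervalCC (σ π : PPerm) : Finset PPerm :=
  (Finset.range (π.1 + 1)).biUnion fun m =>
    (Finset.univ.filter fun p : Equiv.Perm (Fin m) =>
        PPerm.Le σ ⟨m, p⟩ ∧ PPerm.Le ⟨m, p⟩ π).image fun p => (⟨m, p⟩ : PPerm)

/-- The half-open interval `[σ, π)` of the permutation pattern poset. -/
noncomputable def intervalCO (σ π : PPerm) : Finset PPerm :=
  (intervalCC σ π).filter fun lam => lam ≠ π

/-- `π` has an up-adjacency: consecutive positions `i, i+1` with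
`π(i+1) = π(i) + 1`. -/
def HasUpAdj (π : PPerm) : Prop :=
  ∃ i j : Fin π.1, (j : ℕ) = (i : ℕ) + 1 ∧ (π.2 j : ℕ) = (π.2 i : ℕ) + 1

/-- `π` has a down-adjacency: consecutive positions `i, i+1` with
`π(i+1) = π(i) - 1`. -/
def HasDownAdj (π : PPerm) : Prop :=
  ∃ i j : Fin π.1, (j : ℕ) = (i : ℕ) + 1 ∧ (π.2 i : ℕ) = (π.2 j : ℕ) + 1

/-!
Pick an up-adjacency and a down-adjacency of `π`, let `π₁` and `π₂` be `π` with one entry of the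
first, respectively of the second, deleted, and let `π₃` be `π` with both deleted. An occurrence of
`τ` that uses the deleted entry of an adjacency can be moved to the other entry, unless it uses both
and `τ` has an adjacency of the same kind. Hence, if `τ < π` does not have opposing adjacencies,
then `τ` lies below `π₁` or `π₂`, and if it lies below both then it lies below `π₃`. By induction
only such `τ` contribute to `μ(σ, π) = -∑_{σ ≤ τ < π} μ(σ, τ)`, so inclusion–exclusion writes this
sum in terms of the sums of `μ(σ, ·)` over `[σ, π₁]`, `[σ, π₂]` and `[σ, π₃]`, all of which vanish.
-/

open Finset

section MoebiusFunction

open IncidenceAlgebra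

variable {α : Type*} [PartialOrder α] [LocallyFiniteOrder α] [DecidableEq α]

lemma incidenceAlgebra_mu_eq_zero_of_le_or_le {𝕜 : Type*} [AddCommGroup 𝕜] [One 𝕜]
    {a b c₁ c₂ d : α} (hab : a ≠ b) (hc₁ : c₁ < b) (hc₂ : c₂ < b) (hd₁ : d ≤ c₁) (hd₂ : d ≤ c₂)
    (hac₁ : a ≠ c₁) (hac₂ : a ≠ c₂) (had : a ≠ d)
    (h : ∀ x ∈ Ico a b, mu 𝕜 a x ≠ 0 → (x ≤ c₁ ∨ x ≤ c₂) ∧ (x ≤ c₁ → x ≤ c₂ → x ≤ d)) :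
    mu 𝕜 a b = 0 := by
  have hsum : ∀ c, a ≠ c → ∑ x ∈ Icc a c, mu 𝕜 a x = 0 := fun c hc => by
    rw [sum_Icc_mu_right, if_neg hc]
  have hsub : Icc a c₁ ∪ Icc a c₂ ⊆ Ico a b :=
    union_subset (Icc_subset_Ico_right hc₁) (Icc_subset_Ico_right hc₂)
  have hunion : ∑ x ∈ Icc a c₁ ∪ Icc a c₂, mu 𝕜 a x = ∑ x ∈ Ico a b, mu 𝕜 a x := by
    refine sum_subset hsub fun x hx hx' => ?_
    by_contra hne
    have hax := (mem_Ico.1 hx).1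
    exact hx' (by simpa [hax] using (h x hx hne).1)
  have hinter : ∑ x ∈ Icc a d, mu 𝕜 a x = ∑ x ∈ Icc a c₁ ∩ Icc a c₂, mu 𝕜 a x := by
    refine sum_subset (subset_inter (Icc_subset_Icc_right hd₁) (Icc_subset_Icc_right hd₂))
      fun x hx hx' => ?_
    by_contra hne
    have hxb := hsub (mem_union_left _ (mem_inter.1 hx).1)
    simp only [mem_inter, mem_Icc] at hx
    exact hx' (mem_Icc.2 ⟨hx.1.1, (h x hxb hne).2 hx.1.2 hx.2.2⟩)
  have hunion_inter := sum_union_inter (s₁ := Icc a c₁) (s₂ := Icc a c₂) (f := mu 𝕜 a)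
  rw [← hinter, hunion, hsum d had, hsum c₁ hac₁, hsum c₂ hac₂, add_zero, add_zero]
    at hunion_inter
  rw [mu_eq_neg_sum_Ico_of_ne hab, hunion_inter, neg_zero]

end MoebiusFunction

section Covering

variable {α β : Type*} [LinearOrder α]

lemma strictMonoOn_update_id_of_covBy {u v : α} (h : u ⋖ v ∨ v ⋖ u) :
    StrictMonoOn (Function.update id u v) {v}ᶜ := by
  intro x hx y hy hxy
  simp only [Set.mem_compl_iff, Set.mem_singleton_iff] at hx hy
  simp only [Function.update_apply, id_eq]
  rcases h with h | h <;> split_ifs with hxu hyu hyu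
  all_goals subst_vars
  · exact absurd hxy (lt_irrefl _)
  · exact (h.ge_of_gt hxy).lt_of_ne' hy
  · exact hxy.trans h.lt
  · exact hxy
  · exact absurd hxy (lt_irrefl _)
  · exact h.lt.trans hxy
  · exact (h.le_of_lt hxy).lt_of_ne hx
  · exact hxy

lemma covBy_of_strictMono [Preorder β] {f : α → β} (hf : StrictMono f) {a b : α}
    (h : f a ⋖ f b) : a ⋖ b :=
  CovBy.of_image (OrderEmbedding.ofStrictMono f hf) h

lemma ne_of_opposing_covBy [LinearOrder β] {g : α → β} (hg : Function.Injective g)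
    {i j k l : α} (hij : i ⋖ j) (hg_ij : g i ⋖ g j) (hkl : k ⋖ l) (hg_lk : g l ⋖ g k) :
    i ≠ k ∧ i ≠ l ∧ j ≠ k ∧ j ≠ l := by
  have hik : i ≠ k := by
    rintro rfl
    obtain rfl := hij.unique_right hkl
    exact hg_ij.lt.not_gt hg_lk.lt
  have hil : i ≠ l := by
    rintro rfl
    obtain rfl := hg (hg_ij.unique_right hg_lk)
    exact hij.lt.not_gt hkl.lt
  refine ⟨hik, hil, ?_, ?_⟩
  · rintro rfl
    exact hil (hg (hg_ij.unique_left hg_lk))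
  · rintro rfl
    exact hik (hij.unique_left hkl)

end Covering

namespace PPerm

variable {σ τ π : PPerm}

/-- The positions `f 0 < f 1 < ⋯` form an occurrence of the pattern `σ` in `π`; by definition,
`Le σ π` says that an occurrence exists. -/
def IsOccurrence (σ π : PPerm) (f : Fin σ.1 → Fin π.1) : Prop :=
  StrictMono f ∧ ∀ a b : Fin σ.1, σ.2 a < σ.2 b ↔ π.2 (f a) < π.2 (f b)

namespace IsOccurrence

lemma comp {f : Fin σ.1 → Fin τ.1} {g : Fin τ.1 → Fin π.1} (hg : IsOccurrence τ π g)
    (hf : IsOccurrence σ τ f) : IsOccurrence σ π (g ∘ f) :=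
  ⟨hg.1.comp hf.1, fun a b => (hf.2 a b).trans (hg.2 (f a) (f b))⟩

lemma of_comp {f : Fin σ.1 → Fin τ.1} {g : Fin τ.1 → Fin π.1} (hg : IsOccurrence τ π g)
    (hgf : IsOccurrence σ π (g ∘ f)) : IsOccurrence σ τ f :=
  ⟨fun _ _ hab => hg.1.lt_iff_lt.1 (hgf.1 hab),
    fun a b => (hgf.2 a b).trans (hg.2 (f a) (f b)).symm⟩

lemma strictMono_values {f : Fin σ.1 → Fin π.1} (hf : IsOccurrence σ π f) :
    StrictMono fun v => π.2 (f (σ.2.symm v)) := fun v w hvw =>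
  (hf.2 _ _).1 (by simpa only [Equiv.apply_symm_apply] using hvw)

lemma covBy_apply {f : Fin σ.1 → Fin π.1} (hf : IsOccurrence σ π f) {a b : Fin σ.1}
    (h : π.2 (f a) ⋖ π.2 (f b)) : σ.2 a ⋖ σ.2 b :=
  covBy_of_strictMono hf.strictMono_values (by simpa only [Equiv.symm_apply_apply] using h)

lemma update_comp {f : Fin σ.1 → Fin π.1} (hf : IsOccurrence σ π f) {i j : Fin π.1}
    (hij : i ⋖ j) (hv : π.2 i ⋖ π.2 j ∨ π.2 j ⋖ π.2 i) (hj : ∀ a, f a ≠ j) :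
    IsOccurrence σ π (Function.update id i j ∘ f) := by
  refine ⟨fun a b hab => strictMonoOn_update_id_of_covBy (.inl hij) (hj a) (hj b) (hf.1 hab),
    fun a b => ?_⟩
  have hπ : ∀ x, π.2 (Function.update id i j x) = Function.update id (π.2 i) (π.2 j) (π.2 x) := by
    intro x
    simp only [Function.update_apply, id_eq, apply_ite π.2, π.2.injective.eq_iff]
  have hne : ∀ a, π.2 (f a) ≠ π.2 j := fun a => π.2.injective.ne (hj a)
  simp only [Function.comp_apply, hπ]
  rw [(strictMonoOn_update_id_of_covBy hv).lt_iff_lt (hne a) (hne b)]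
  exact hf.2 a b

end IsOccurrence

lemma Le.length_le (h : Le σ π) : σ.1 ≤ π.1 := by
  obtain ⟨f, hf, -⟩ := h
  simpa only [Fintype.card_fin] using Fintype.card_le_of_injective f hf.injective

lemma Le.eq_of_length_le (h : Le σ π) (hlen : π.1 ≤ σ.1) : σ = π := by
  obtain ⟨m, p⟩ := σ
  obtain ⟨n, q⟩ := π
  obtain rfl : m = n := h.length_le.antisymm hlen
  obtain ⟨f, hf⟩ : ∃ f, IsOccurrence ⟨m, p⟩ ⟨m, q⟩ f := h
  congr 1
  ext x : 1
  simpa only [hf.1.apply_eq, p.symm_apply_apply] using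
    (hf.strictMono_values.apply_eq (x := p x)).symm

instance : PartialOrder PPerm where
  le := Le
  le_refl π := ⟨id, strictMono_id, fun _ _ => Iff.rfl⟩
  le_trans _ _ _ := fun ⟨_, hf⟩ ⟨_, hg⟩ => ⟨_, IsOccurrence.comp hg hf⟩
  le_antisymm _ _ h h' := h.eq_of_length_le h'.length_le

lemma length_strictMono : StrictMono (Sigma.fst : PPerm → ℕ) := fun _ _ h =>
  lt_of_not_ge fun hlen => h.ne (Le.eq_of_length_le h.le hlen)

instance : WellFoundedLT PPerm := length_strictMono.wellFoundedLT

lemma mem_intervalCC : τ ∈ intervalCC σ π ↔ σ ≤ τ ∧ τ ≤ π := by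
  simp only [intervalCC, mem_biUnion, mem_range, mem_image, mem_filter, mem_univ, true_and]
  constructor
  · rintro ⟨m, -, p, h, rfl⟩
    exact h
  · rintro ⟨hστ, hτπ⟩
    exact ⟨τ.1, Nat.lt_succ_of_le (Le.length_le hτπ), τ.2, ⟨hστ, hτπ⟩, rfl⟩

noncomputable instance : LocallyFiniteOrder PPerm :=
  .ofIcc PPerm intervalCC fun _ _ _ => mem_intervalCC

lemma sigma_filter_eq_Ico (σ π : PPerm) :
    (range π.1).sigma (fun m => univ.filter fun p : Equiv.Perm (Fin m) =>
      Le σ ⟨m, p⟩ ∧ Le ⟨m, p⟩ π) = Ico σ π := by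
  ext τ
  simp only [mem_sigma, mem_range, mem_filter, mem_univ, true_and, mem_Ico]
  constructor
  · rintro ⟨hlen, hστ, hτπ⟩
    exact ⟨hστ, lt_of_le_of_ne hτπ (by rintro rfl; exact lt_irrefl _ hlen)⟩
  · rintro ⟨hστ, hτπ⟩
    exact ⟨length_strictMono hτπ, hστ, hτπ.le⟩

lemma muAux_eq_incidenceAlgebra_mu (σ : PPerm) {n : ℕ} (hn : π.1 < n) :
    muAux n σ π = IncidenceAlgebra.mu ℤ σ π := by
  induction n generalizing π with
  | zero => exact absurd hn (Nat.not_lt_zero _)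
  | succ n ih =>
    rw [muAux, IncidenceAlgebra.mu_apply]
    split_ifs with heq hle
    · rfl
    · rw [← sigma_filter_eq_Ico, sum_sigma]
      congr 1
      refine sum_congr rfl fun m hm => sum_congr rfl fun p _ => ih ?_
      exact (mem_range.1 hm).trans_le (Nat.le_of_lt_succ hn)
    · rw [Ico_eq_empty fun h => hle h.le, sum_empty, neg_zero]

lemma mu_eq_incidenceAlgebra_mu (σ π : PPerm) : mu σ π = IncidenceAlgebra.mu ℤ σ π :=
  muAux_eq_incidenceAlgebra_mu σ (Nat.lt_succ_self _)

/-- The pattern formed by the entries of `π` at the positions in `s`, with both positions and values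
renumbered in increasing order. The deletion of the entry at `i` is `π.restrict (univ.erase i)`. -/
noncomputable def restrict (π : PPerm) (s : Finset (Fin π.1)) : PPerm :=
  ⟨#s, (s.orderIsoOfFin rfl).toEquiv.trans <|
    (π.2.subtypeEquiv fun _ => (mem_map' π.2.toEmbedding).symm).trans <|
      ((s.map π.2.toEmbedding).orderIsoOfFin (card_map _)).symm.toEquiv⟩

lemma isOccurrence_restrict (π : PPerm) (s : Finset (Fin π.1)) :
    IsOccurrence (π.restrict s) π (s.orderEmbOfFin rfl) :=
  ⟨(s.orderEmbOfFin rfl).strictMono, fun _ _ =>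
    ((s.map π.2.toEmbedding).orderIsoOfFin (card_map _)).symm.lt_iff_lt⟩

lemma le_restrict_iff {s : Finset (Fin π.1)} :
    σ ≤ π.restrict s ↔ ∃ f, IsOccurrence σ π f ∧ ∀ a, f a ∈ s := by
  constructor
  · rintro ⟨f, hf⟩
    exact ⟨_, (isOccurrence_restrict π s).comp hf, fun a => s.orderEmbOfFin_mem rfl (f a)⟩
  · rintro ⟨f, hf, hs⟩
    have hlift : ∀ a, ∃ b, s.orderEmbOfFin rfl b = f a := fun a => by
      simpa only [← Set.mem_range, range_orderEmbOfFin, mem_coe] using hs a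
    choose g hg using hlift
    obtain rfl : s.orderEmbOfFin rfl ∘ g = f := funext hg
    exact ⟨g, (isOccurrence_restrict π s).of_comp hf⟩

lemma restrict_strictMono (π : PPerm) : StrictMono π.restrict := fun s t hst => by
  refine lt_of_le_of_ne (le_restrict_iff.2
    ⟨_, isOccurrence_restrict π s, fun a => hst.subset (s.orderEmbOfFin_mem rfl a)⟩) fun h => ?_
  exact (card_lt_card hst).ne (congrArg Sigma.fst h)

lemma restrict_univ (π : PPerm) : π.restrict univ = π :=
  Le.eq_of_length_le ⟨_, isOccurrence_restrict π univ⟩ (card_fin _).ge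

lemma restrict_erase_lt (π : PPerm) (i : Fin π.1) : π.restrict (univ.erase i) < π :=
  (π.restrict_strictMono (erase_ssubset (mem_univ i))).trans_eq π.restrict_univ

lemma le_restrict_erase_or_exists_isOccurrence {s : Finset (Fin π.1)} {i j : Fin π.1}
    (hij : i ⋖ j) (hv : π.2 i ⋖ π.2 j ∨ π.2 j ⋖ π.2 i) (hj : j ∈ s) (hσ : σ ≤ π.restrict s) :
    σ ≤ π.restrict (s.erase i) ∨ ∃ f, IsOccurrence σ π f ∧ ∃ a b, f a = i ∧ f b = j := by
  obtain ⟨f, hf, hs⟩ := le_restrict_iff.1 hσ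
  by_cases hfi : ∃ a, f a = i
  · by_cases hfj : ∃ b, f b = j
    · obtain ⟨a, ha⟩ := hfi
      obtain ⟨b, hb⟩ := hfj
      exact .inr ⟨f, hf, a, b, ha, hb⟩
    · rw [not_exists] at hfj
      refine .inl (le_restrict_iff.2 ⟨_, hf.update_comp hij hv hfj, fun a => ?_⟩)
      rw [Function.comp_apply, Function.update_apply]
      split_ifs with ha
      · exact mem_erase.2 ⟨hij.ne', hj⟩
      · exact mem_erase.2 ⟨ha, hs a⟩
  · rw [not_exists] at hfi
    exact .inl (le_restrict_iff.2 ⟨f, hf, fun a => mem_erase.2 ⟨hfi a, hs a⟩⟩)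

lemma hasUpAdj_iff : HasUpAdj π ↔ ∃ i j, i ⋖ j ∧ π.2 i ⋖ π.2 j := by
  simp only [HasUpAdj, Fin.covBy_iff, Nat.covBy_iff_add_one_eq, eq_comm]

lemma hasDownAdj_iff : HasDownAdj π ↔ ∃ i j, i ⋖ j ∧ π.2 j ⋖ π.2 i := by
  simp only [HasDownAdj, Fin.covBy_iff, Nat.covBy_iff_add_one_eq, eq_comm]

lemma le_restrict_erase_of_not_hasUpAdj (hup : ¬ HasUpAdj σ) {s : Finset (Fin π.1)}
    {i j : Fin π.1} (hij : i ⋖ j) (hv : π.2 i ⋖ π.2 j) (hj : j ∈ s) (hσ : σ ≤ π.restrict s) :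
    σ ≤ π.restrict (s.erase i) := by
  refine (le_restrict_erase_or_exists_isOccurrence hij (.inl hv) hj hσ).resolve_right ?_
  rintro ⟨f, hf, a, b, rfl, rfl⟩
  exact hup (hasUpAdj_iff.2 ⟨a, b, covBy_of_strictMono hf.1 hij, hf.covBy_apply hv⟩)

lemma le_restrict_erase_of_not_hasDownAdj (hdown : ¬ HasDownAdj σ) {s : Finset (Fin π.1)}
    {i j : Fin π.1} (hij : i ⋖ j) (hv : π.2 j ⋖ π.2 i) (hj : j ∈ s) (hσ : σ ≤ π.restrict s) :
    σ ≤ π.restrict (s.erase i) := by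
  refine (le_restrict_erase_or_exists_isOccurrence hij (.inr hv) hj hσ).resolve_right ?_
  rintro ⟨f, hf, a, b, rfl, rfl⟩
  exact hdown (hasDownAdj_iff.2 ⟨a, b, covBy_of_strictMono hf.1 hij, hf.covBy_apply hv⟩)

lemma four_le_length_of_opposing_adjacencies (hup : HasUpAdj π) (hdown : HasDownAdj π) :
    4 ≤ π.1 := by
  obtain ⟨i, j, hij, hv_ij⟩ := hasUpAdj_iff.1 hup
  obtain ⟨k, l, hkl, hv_lk⟩ := hasDownAdj_iff.1 hdown
  obtain ⟨hik, hil, hjk, hjl⟩ := ne_of_opposing_covBy π.2.injective hij hv_ij hkl hv_lk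
  have hcard : #{i, j, k, l} = 4 :=
    card_eq_succ.2 ⟨i, {j, k, l}, by simp [hij.ne, hik, hil], rfl,
      card_eq_three.2 ⟨j, k, l, hjk, hjl, hkl.ne, rfl⟩⟩
  exact hcard ▸ card_finset_fin_le _

lemma le_restrict_of_no_opposing_adjacencies (hno : ¬ HasUpAdj σ ∨ ¬ HasDownAdj σ)
    (hσ : σ ≤ π) {i j k l : Fin π.1} (hij : i ⋖ j) (hv_ij : π.2 i ⋖ π.2 j)
    (hkl : k ⋖ l) (hv_lk : π.2 l ⋖ π.2 k) :
    (σ ≤ π.restrict (univ.erase i) ∨ σ ≤ π.restrict (univ.erase k)) ∧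
      (σ ≤ π.restrict (univ.erase i) → σ ≤ π.restrict (univ.erase k) →
        σ ≤ π.restrict ((univ.erase i).erase k)) := by
  obtain ⟨-, hil, hjk, -⟩ := ne_of_opposing_covBy π.2.injective hij hv_ij hkl hv_lk
  rw [← restrict_univ π] at hσ
  rcases hno with hup | hdown
  · refine ⟨.inl (le_restrict_erase_of_not_hasUpAdj hup hij hv_ij (mem_univ j) hσ),
      fun _ hk => ?_⟩
    rw [erase_right_comm]
    exact le_restrict_erase_of_not_hasUpAdj hup hij hv_ij
      (mem_erase.2 ⟨hjk, mem_univ j⟩) hk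
  · exact ⟨.inr (le_restrict_erase_of_not_hasDownAdj hdown hkl hv_lk (mem_univ l) hσ),
      fun hi _ => le_restrict_erase_of_not_hasDownAdj hdown hkl hv_lk
        (mem_erase.2 ⟨hil.symm, mem_univ l⟩) hi⟩

lemma mu_eq_zero_of_forall_no_opposing_adjacencies (hlen : σ.1 + 2 < π.1)
    (hup : HasUpAdj π) (hdown : HasDownAdj π)
    (hno : ∀ τ ∈ Ico σ π, mu σ τ ≠ 0 → ¬ HasUpAdj τ ∨ ¬ HasDownAdj τ) :
    mu σ π = 0 := by
  obtain ⟨i, j, hij, hv_ij⟩ := hasUpAdj_iff.1 hup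
  obtain ⟨k, l, hkl, hv_lk⟩ := hasDownAdj_iff.1 hdown
  have hne : ∀ {s : Finset (Fin π.1)}, π.1 ≤ #s + 2 → σ ≠ π.restrict s := fun hs h =>
    hlen.not_ge (h ▸ hs)
  have hcard : ∀ (s : Finset (Fin π.1)) (x : Fin π.1), #s ≤ #(s.erase x) + 1 := fun _ _ =>
    Nat.sub_le_iff_le_add.1 pred_card_le_card_erase
  have hcard_univ : ∀ x : Fin π.1, π.1 ≤ #(univ.erase x) + 1 := fun x =>
    (card_fin π.1).ge.trans (hcard univ x)
  simp only [mu_eq_incidenceAlgebra_mu] at hno ⊢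
  exact incidenceAlgebra_mu_eq_zero_of_le_or_le (by rintro rfl; omega)
    (π.restrict_erase_lt i) (π.restrict_erase_lt k)
    (π.restrict_strictMono.monotone (erase_subset k _))
    (π.restrict_strictMono.monotone (erase_subset_erase k (erase_subset i _)))
    (hne ((hcard_univ i).trans (Nat.le_succ _))) (hne ((hcard_univ k).trans (Nat.le_succ _)))
    (hne ((hcard_univ i).trans (Nat.succ_le_succ (hcard _ k))))
    fun τ hτ hμ => le_restrict_of_no_opposing_adjacencies (hno τ hτ hμ) (mem_Ico.1 hτ).2.le
      hij hv_ij hkl hv_lk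

end PPerm

open PPerm

/-- The lengths in `hlen` have to differ by more than `2`: deleting one entry from an up-adjacency
and one from a down-adjacency of `τ` may leave exactly `σ`, and for instance `μ(12, 1243) = 1`. -/
theorem mu_one_eq_zero_of_opposing_adjacencies_general {σ π : PPerm}
    (hup : HasUpAdj π) (hdown : HasDownAdj π)
    (hlen : ∀ τ ∈ Icc σ π, HasUpAdj τ → HasDownAdj τ → σ.1 + 2 < τ.1) :
    mu σ π = 0 := by
  induction π using WellFoundedLT.induction with | _ π ih
  by_cases hσπ : σ ≤ π
  · refine mu_eq_zero_of_forall_no_opposing_adjacencies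
      (hlen π (right_mem_Icc.2 hσπ) hup hdown) hup hdown fun τ hτ hμ => ?_
    by_contra! hopp
    have hτπ : τ < π := (mem_Ico.1 hτ).2
    exact hμ (ih τ hτπ hopp.1 hopp.2 fun ρ hρ => hlen ρ (Icc_subset_Icc_right hτπ.le hρ))
  · rw [mu_eq_incidenceAlgebra_mu, IncidenceAlgebra.apply_eq_zero_of_not_le hσπ]

/-- **Permutations with opposing adjacencies are Möbius zeros.**  If `π`
contains at least one up-adjacency and at least one down-adjacency, then
`μ(1,π) = 0`. -/
theorem mu_one_eq_zero_of_opposing_adjacencies (π : PPerm)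
    (hup : HasUpAdj π) (hdown : HasDownAdj π) :
    mu PPerm.one π = 0 :=
  mu_one_eq_zero_of_opposing_adjacencies_general hup hdown fun _ _ hup' hdown' =>
    four_le_length_of_opposing_adjacencies hup' hdown'
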